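/- Assume condition (D1) (A is increasing on [0,1]), B(1) = 0, B(u) ≥ 0 for all u ∈ [0,1], and that u ↦ a(u)/(2B(u)) (with the convention that it equals 0 when a(u) = B(u) = 0) is locally integrable on (0,1). Define Ψ(u) := ∫_{1/2}^u a(v)/(2B(v)) dv for u ∈ (0,1); Ψ is continuous and increasing. Let Ψ^{-1} denote its inverse, extended by setting Ψ^{-1}(x) = 1 for x ≥ lim_{u→1} Ψ(u) when this limit is finite and Ψ^{-1}(x) = 0 for x ≤ lim_{u→0} Ψ(u) when this limit is finite. Then Ψ^{-1} is a cumulative distribution function on ℝ and solves the stationary equation (1/2)∂²_x(A(Ψ^{-1}(x))) − ∂_x(B(Ψ^{-1}(x))) = 0 in the sense of distributions. -/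

import Mathlib

open MeasureTheory Set Filter Topology
open scoped ENNReal

noncomputable section

/-- `primitive f u = ∫₀^u f(v) dv`. -/
def primitive (f : ℝ → ℝ) : ℝ → ℝ := fun u => ∫ v in (0:ℝ)..u, f v

/-- Pseudo-inverse of a cdf: `F⁻¹(u) = inf {x | F x > u}`. -/
def pinv (F : ℝ → ℝ) (u : ℝ) : ℝ := sInf {x : ℝ | u < F x}

/-- `F` is the cumulative distribution function of a probability measure on `ℝ`. -/
def IsCDF (F : ℝ → ℝ) : Prop :=
  Monotone F ∧ (∀ x : ℝ, ContinuousWithinAt F (Set.Ici x) x) ∧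
    Tendsto F atBot (nhds 0) ∧ Tendsto F atTop (nhds 1)

/-- `F` solves the stationary equation `(1/2) ∂ₓₓ (A(F)) - ∂ₓ (B(F)) = 0` in the sense
of distributions. -/
def IsStationarySolution (A B : ℝ → ℝ) (F : ℝ → ℝ) : Prop :=
  ∀ φ : ℝ → ℝ, ContDiff ℝ (⊤ : ℕ∞) φ → HasCompactSupport φ →
    (1/2) * (∫ x : ℝ, A (F x) * deriv (deriv φ) x) + (∫ x : ℝ, B (F x) * deriv φ x) = 0

/-- `Ψ(u) = ∫_{1/2}^u a(v) / (2 B(v)) dv`. -/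
def Psi (a b : ℝ → ℝ) (u : ℝ) : ℝ := ∫ v in (1/2:ℝ)..u, a v / (2 * primitive b v)

/-- The inverse of `Ψ`, extended by `1` above `lim_{u→1} Ψ(u)` and by `0` below
`lim_{u→0} Ψ(u)` when these limits are finite. -/
def PsiInv (a b : ℝ → ℝ) (x : ℝ) : ℝ :=
  sSup {u : ℝ | u ∈ Set.Ioo (0:ℝ) 1 ∧ Psi a b u ≤ x}

/-! Since `a = 2B · a/(2B)` almost everywhere and `a/(2B) ≥ 0`, the first mean value theorem for
integrals gives `A(v) - A(u) = 2B(c) (Ψ(v) - Ψ(u))` for some `c` between `u` and `v`. Hence `Ψ`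
inherits strict monotonicity from `A`, and substituting `u = F(x)`, `v = F(y)` with `F = Ψ⁻¹`
shows that `A ∘ F` has derivative `2B ∘ F` wherever `0 < F < 1`. Where `F` is locally equal to `0`
or `1` both sides vanish because `B(0) = B(1) = 0`, which leaves at most two points; these are
harmless because `A ∘ F` and `B ∘ F` are continuous. Integration by parts against a test function
concludes. -/

section Order

variable {α β : Type*} [LinearOrder α]

theorem tendsto_nhds_of_forall_mem_Ioo [DenselyOrdered α] [TopologicalSpace α] [OrderTopology α]
    {l r c : α} {F : β → α} {f : Filter β} (hF : ∀ y, F y ∈ Icc l r) (hc : c ∈ Icc l r)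
    (hlower : ∀ w ∈ Ioo l r, w < c → ∀ᶠ y in f, w ≤ F y)
    (hupper : ∀ w ∈ Ioo l r, c < w → ∀ᶠ y in f, F y ≤ w) : Tendsto F f (𝓝 c) := by
  refine tendsto_order.2 ⟨fun p hp ↦ ?_, fun p hp ↦ ?_⟩
  · rcases lt_or_ge p l with hpl | hlp
    · exact .of_forall fun y ↦ hpl.trans_le (hF y).1
    · obtain ⟨w, hpw, hwc⟩ := exists_between hp
      exact (hlower w ⟨hlp.trans_lt hpw, hwc.trans_le hc.2⟩ hwc).mono fun y ↦ hpw.trans_le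
  · rcases lt_or_ge r p with hrp | hpr
    · exact .of_forall fun y ↦ (hF y).2.trans_lt hrp
    · obtain ⟨w, hcw, hwp⟩ := exists_between hp
      exact (hupper w ⟨hc.1.trans_lt hcw, hwp.trans_le hpr⟩ hcw).mono fun y hy ↦ hy.trans_lt hwp

variable [PartialOrder β] [TopologicalSpace α] [OrderClosedTopology α] {F : α → β} {c : β} {x : α}

theorem eventuallyEq_const_of_not_isGreatest (hF : Monotone F) (hc : ∀ y, c ≤ F y) (hx : F x = c)
    (hgreatest : ¬IsGreatest (F ⁻¹' {c}) x) : F =ᶠ[𝓝 x] fun _ ↦ c := by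
  obtain ⟨y, hy, hxy⟩ : ∃ y, F y = c ∧ x < y := by
    by_contra! h
    exact hgreatest ⟨hx, fun y hy ↦ h y hy⟩
  filter_upwards [Iio_mem_nhds hxy] with z hz
  exact le_antisymm ((hF hz.le).trans_eq hy) (hc z)

theorem eventuallyEq_const_of_not_isLeast (hF : Monotone F) (hc : ∀ y, F y ≤ c) (hx : F x = c)
    (hleast : ¬IsLeast (F ⁻¹' {c}) x) : F =ᶠ[𝓝 x] fun _ ↦ c :=
  eventuallyEq_const_of_not_isGreatest (α := αᵒᵈ) (β := βᵒᵈ) hF.dual hc hx hleast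

end Order

section Calculus

theorem hasDerivAt_of_hasDerivAt_off_countable {E : Type*} [NormedAddCommGroup E]
    [NormedSpace ℝ E] [CompleteSpace E] {f f' : ℝ → E} {s : Set ℝ} (hs : s.Countable)
    (hf : Continuous f) (hf' : Continuous f') (hderiv : ∀ x ∉ s, HasDerivAt f (f' x) x) (x : ℝ) :
    HasDerivAt f (f' x) x := by
  have hint (y : ℝ) : f y = f 0 + ∫ t in (0 : ℝ)..y, f' t := by
    rw [integral_eq_of_hasDerivAt_off_countable f f' hs hf.continuousOn
      (fun t ht ↦ hderiv t ht.2) (hf'.intervalIntegrable 0 y)]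
    abel
  rw [funext hint]
  exact (hf'.integral_hasStrictDerivAt 0 x).hasDerivAt.const_add _

theorem intervalIntegrable_of_locallyIntegrableOn {E : Type*} [NormedAddCommGroup E]
    {μ : Measure ℝ} {g : ℝ → E} {s : Set ℝ} [s.OrdConnected] (hg : LocallyIntegrableOn g s μ)
    {u v : ℝ} (hu : u ∈ s) (hv : v ∈ s) : IntervalIntegrable g μ u v :=
  (hg.integrableOn_compact_subset (OrdConnected.uIcc_subset inferInstance hu hv)
    isCompact_uIcc).intervalIntegrable

theorem continuousOn_integral_of_locallyIntegrableOn {E : Type*} [NormedAddCommGroup E]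
    [NormedSpace ℝ E] {μ : Measure ℝ} [NullSingletonClass μ] {g : ℝ → E} {l r c : ℝ}
    (hg : LocallyIntegrableOn g (Ioo l r) μ) (hc : c ∈ Ioo l r) :
    ContinuousOn (fun u ↦ ∫ t in c..u, g t ∂μ) (Ioo l r) := by
  intro x hx
  obtain ⟨p, hlp, hp⟩ := exists_between (lt_min hx.1 hc.1)
  obtain ⟨q, hq, hqr⟩ := exists_between (max_lt hx.2 hc.2)
  rw [lt_min_iff] at hp
  rw [max_lt_iff] at hq
  have hpq : IntervalIntegrable g μ p q := intervalIntegrable_of_locallyIntegrableOn hg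
    ⟨hlp, hp.1.trans hx.2⟩ ⟨hx.1.trans hq.1, hqr⟩
  refine ((intervalIntegral.continuousOn_primitive_interval' hpq
    (Icc_subset_uIcc ⟨hp.2.le, hq.2.le⟩)).continuousAt ?_).continuousWithinAt
  exact mem_of_superset (Icc_mem_nhds hp.1 hq.1) Icc_subset_uIcc

end Calculus

section OfRealDiv

theorem enorm_div_le_ofReal_div_ofReal {p q : ℝ} (hp : 0 ≤ p) :
    ‖p / q‖ₑ ≤ ENNReal.ofReal p / ENNReal.ofReal q := by
  rcases hp.eq_or_lt with rfl | hp'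
  · simp
  rcases le_or_gt q 0 with hq | hq
  · simp [ENNReal.ofReal_of_nonpos hq, ENNReal.div_zero, hp']
  · rw [Real.enorm_of_nonneg (div_nonneg hp hq.le), ENNReal.ofReal_div_of_pos hq]

theorem eq_mul_div_of_ofReal_div_ofReal_lt_top {p q : ℝ} (hp : 0 ≤ p)
    (h : ENNReal.ofReal p / ENNReal.ofReal q < ⊤) : p = q * (p / q) := by
  rcases eq_or_ne q 0 with rfl | hq
  · have : p ≤ 0 := by
      by_contra! hp'
      simp [ENNReal.div_zero, hp'] at h
    simp [le_antisymm this hp]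
  · exact (mul_div_cancel₀ p hq).symm

variable {α : Type*} [MeasurableSpace α] {μ : Measure α} {p q : α → ℝ}

theorem integrable_div_of_lintegral_ofReal_div_lt_top (hp : AEMeasurable p μ)
    (hq : AEMeasurable q μ) (hp0 : ∀ᵐ x ∂μ, 0 ≤ p x)
    (h : ∫⁻ x, ENNReal.ofReal (p x) / ENNReal.ofReal (q x) ∂μ < ⊤) :
    Integrable (fun x ↦ p x / q x) μ :=
  ⟨(hp.div hq).aestronglyMeasurable,
    (lintegral_mono_ae (hp0.mono fun _ ↦ enorm_div_le_ofReal_div_ofReal)).trans_lt h⟩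

theorem ae_eq_mul_div_of_lintegral_ofReal_div_lt_top (hp : AEMeasurable p μ)
    (hq : AEMeasurable q μ) (hp0 : ∀ᵐ x ∂μ, 0 ≤ p x)
    (h : ∫⁻ x, ENNReal.ofReal (p x) / ENNReal.ofReal (q x) ∂μ < ⊤) :
    ∀ᵐ x ∂μ, p x = q x * (p x / q x) := by
  filter_upwards [hp0, ae_lt_top' (hp.ennreal_ofReal.div hq.ennreal_ofReal) h.ne] with x hx hlt
  exact eq_mul_div_of_ofReal_div_ofReal_lt_top hx hlt

end OfRealDiv

/-- The relation `dA = β dΨ` on `s`, in mean value form. It encodes a derivative of `A` with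
respect to `Ψ` without requiring either function to be differentiable. -/
def HasMeanSlopeOn (A Ψ β : ℝ → ℝ) (s : Set ℝ) : Prop :=
  ∀ ⦃u⦄, u ∈ s → ∀ ⦃v⦄, v ∈ s → ∃ c ∈ uIcc u v, A v - A u = β c * (Ψ v - Ψ u)

namespace HasMeanSlopeOn

variable {A Ψ β F : ℝ → ℝ} {s : Set ℝ} {x : ℝ}

theorem strictMonoOn (h : HasMeanSlopeOn A Ψ β s) (hA : StrictMonoOn A s)
    (hΨ : MonotoneOn Ψ s) : StrictMonoOn Ψ s := by
  intro u hu v hv huv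
  refine (hΨ hu hv huv.le).lt_of_ne fun hΨuv ↦ (hA hu hv huv).ne ?_
  obtain ⟨c, -, hc⟩ := h hu hv
  rwa [hΨuv, sub_self, mul_zero, sub_eq_zero, eq_comm] at hc

theorem hasDerivAt_comp (h : HasMeanSlopeOn A Ψ β s) (hs : s ∈ 𝓝 (F x))
    (hF : ContinuousAt F x) (hΨF : ∀ᶠ y in 𝓝 x, Ψ (F y) = y) (hβ : ContinuousAt β (F x)) :
    HasDerivAt (fun y ↦ A (F y)) (β (F x)) x := by
  obtain ⟨c, hc⟩ := Eventually.choice <| (hF.eventually_mem hs).mono fun y hy ↦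
    h (mem_of_mem_nhds hs) hy
  have hcx : Tendsto c (𝓝 x) (𝓝 (F x)) := by
    have hmin := tendsto_const_nhds (x := F x).min hF.tendsto
    have hmax := tendsto_const_nhds (x := F x).max hF.tendsto
    rw [min_self] at hmin
    rw [max_self] at hmax
    exact tendsto_of_tendsto_of_tendsto_of_le_of_le' hmin hmax
      (hc.mono fun y hy ↦ hy.1.1) (hc.mono fun y hy ↦ hy.1.2)
  rw [hasDerivAt_iff_tendsto_slope]
  refine ((hβ.tendsto.comp hcx).mono_left nhdsWithin_le_nhds).congr' ?_
  filter_upwards [nhdsWithin_le_nhds hc, nhdsWithin_le_nhds hΨF, self_mem_nhdsWithin]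
    with y hcy hΨy hyx
  rw [slope_def_field, hcy.2, hΨy, hΨF.self_of_nhds, Function.comp_apply,
    mul_div_cancel_right₀ _ (sub_ne_zero.2 hyx)]

end HasMeanSlopeOn

/-- The inverse of `Ψ : (0, 1) → ℝ`, extended to `ℝ` by `1` above the range of `Ψ` and by `0`
below it; the value `0` is the junk value `sSup ∅ = 0`. -/
def extendedInverse (Ψ : ℝ → ℝ) (x : ℝ) : ℝ := sSup {u : ℝ | u ∈ Ioo (0 : ℝ) 1 ∧ Ψ u ≤ x}

section ExtendedInverse

variable {Ψ : ℝ → ℝ} {u x : ℝ}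

theorem extendedInverse_mem_Icc (Ψ : ℝ → ℝ) (x : ℝ) : extendedInverse Ψ x ∈ Icc (0 : ℝ) 1 :=
  ⟨Real.sSup_nonneg fun _ hu ↦ hu.1.1.le, Real.sSup_le (fun _ hu ↦ hu.1.2.le) zero_le_one⟩

theorem le_extendedInverse (hu : u ∈ Ioo (0 : ℝ) 1) (hx : Ψ u ≤ x) : u ≤ extendedInverse Ψ x :=
  le_csSup ⟨1, fun _ hw ↦ hw.1.2.le⟩ ⟨hu, hx⟩

theorem extendedInverse_le (hΨ : MonotoneOn Ψ (Ioo 0 1)) (hu : u ∈ Ioo (0 : ℝ) 1)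
    (hx : x < Ψ u) : extendedInverse Ψ x ≤ u := by
  refine Real.sSup_le (fun w hw ↦ ?_) hu.1.le
  by_contra! huw
  exact (hx.trans_le (hΨ hu hw.1 huw.le)).not_ge hw.2

theorem monotone_extendedInverse (Ψ : ℝ → ℝ) : Monotone (extendedInverse Ψ) := fun _ y hxy ↦
  Real.sSup_le (fun _ hw ↦ le_extendedInverse hw.1 (hw.2.trans hxy))
    (extendedInverse_mem_Icc Ψ y).1

theorem extendedInverse_apply (hΨ : StrictMonoOn Ψ (Ioo 0 1)) (hu : u ∈ Ioo (0 : ℝ) 1) :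
    extendedInverse Ψ (Ψ u) = u :=
  le_antisymm
    (Real.sSup_le (fun _ hw ↦ (hΨ.le_iff_le hw.1 hu).1 hw.2) hu.1.le)
    (le_extendedInverse hu le_rfl)

theorem continuous_extendedInverse (hΨ : StrictMonoOn Ψ (Ioo 0 1)) :
    Continuous (extendedInverse Ψ) := by
  refine continuous_iff_continuousAt.2 fun x ↦ tendsto_nhds_of_forall_mem_Ioo
    (extendedInverse_mem_Icc Ψ) (extendedInverse_mem_Icc Ψ x) (fun w hw hwx ↦ ?_)
    (fun w hw hxw ↦ ?_)
  · have hΨw : Ψ w < x := by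
      by_contra! h
      exact hwx.not_ge ((monotone_extendedInverse Ψ h).trans_eq (extendedInverse_apply hΨ hw))
    exact (lt_mem_nhds hΨw).mono fun y hy ↦ le_extendedInverse hw hy.le
  · have hΨw : x < Ψ w := by
      by_contra! h
      exact hxw.not_ge (le_extendedInverse hw h)
    exact (gt_mem_nhds hΨw).mono fun y ↦ extendedInverse_le hΨ.monotoneOn hw

theorem isCDF_extendedInverse (hΨ : StrictMonoOn Ψ (Ioo 0 1)) : IsCDF (extendedInverse Ψ) := by
  refine ⟨monotone_extendedInverse Ψ,
    fun x ↦ (continuous_extendedInverse hΨ).continuousWithinAt, ?_, ?_⟩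
  · refine tendsto_nhds_of_forall_mem_Ioo (extendedInverse_mem_Icc Ψ) (by simp)
      (fun w hw hw0 ↦ absurd hw.1 hw0.not_gt) fun w hw _ ↦ ?_
    exact (eventually_lt_atBot (Ψ w)).mono fun y ↦ extendedInverse_le hΨ.monotoneOn hw
  · refine tendsto_nhds_of_forall_mem_Ioo (extendedInverse_mem_Icc Ψ) (by simp)
      (fun w hw _ ↦ ?_) fun w hw hw1 ↦ absurd hw.2 hw1.not_gt
    exact (eventually_ge_atTop (Ψ w)).mono fun y ↦ le_extendedInverse hw

theorem apply_extendedInverse (hΨc : ContinuousOn Ψ (Ioo 0 1)) (hΨ : MonotoneOn Ψ (Ioo 0 1))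
    (hx : extendedInverse Ψ x ∈ Ioo (0 : ℝ) 1) : Ψ (extendedInverse Ψ x) = x := by
  have hcont : ContinuousAt Ψ (extendedInverse Ψ x) := hΨc.continuousAt (Ioo_mem_nhds hx.1 hx.2)
  have hmem : ∀ᶠ w in 𝓝 (extendedInverse Ψ x), w ∈ Ioo (0 : ℝ) 1 := Ioo_mem_nhds hx.1 hx.2
  refine le_antisymm (le_of_not_gt fun h ↦ ?_) (le_of_not_gt fun h ↦ ?_)
  · obtain ⟨w, hwx, hw, hxw⟩ := (hmem.and (hcont.eventually_const_lt h)).exists_lt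
    exact (extendedInverse_le hΨ hw hxw).not_gt hwx
  · obtain ⟨w, hxw, hw, hwx⟩ := (hmem.and (hcont.eventually_lt_const h)).exists_gt
    exact (le_extendedInverse hw hwx.le).not_gt hxw

end ExtendedInverse

section Stationary

variable {A B F Ψ : ℝ → ℝ}

theorem isStationarySolution_of_hasDerivAt (hB : Continuous fun x ↦ B (F x))
    (hA : ∀ x, HasDerivAt (fun y ↦ A (F y)) (2 * B (F x)) x) : IsStationarySolution A B F := by
  intro φ hφ hφc
  have hφ' : ContDiff ℝ (⊤ : ℕ∞) (deriv φ) := (contDiff_infty_iff_deriv.1 hφ).2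
  have hφ'' : ContDiff ℝ (⊤ : ℕ∞) (deriv (deriv φ)) := (contDiff_infty_iff_deriv.1 hφ').2
  have hAc : Continuous fun x ↦ A (F x) := continuous_iff_continuousAt.2 fun x ↦ (hA x).continuousAt
  have hparts : ∫ x, A (F x) * deriv (deriv φ) x = -∫ x, 2 * B (F x) * deriv φ x :=
    integral_mul_deriv_eq_deriv_mul_of_integrable (fun x _ ↦ hA x)
      (fun x _ ↦ (hφ'.differentiable (by simp) x).hasDerivAt)
      ((hAc.mul hφ''.continuous).integrable_of_hasCompactSupport hφc.deriv.deriv.mul_left)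
      (((hB.const_mul 2).mul hφ'.continuous).integrable_of_hasCompactSupport hφc.deriv.mul_left)
      ((hAc.mul hφ'.continuous).integrable_of_hasCompactSupport hφc.deriv.mul_left)
  simp only [mul_assoc, integral_const_mul] at hparts
  rw [hparts]
  ring

theorem hasDerivAt_comp_extendedInverse (hB : ContinuousOn B (Icc 0 1)) (hB₀ : B 0 = 0)
    (hB₁ : B 1 = 0) (hΨc : ContinuousOn Ψ (Ioo 0 1)) (hΨ : StrictMonoOn Ψ (Ioo 0 1))
    (hAΨ : HasMeanSlopeOn A Ψ (fun u ↦ 2 * B u) (Ioo 0 1)) {x : ℝ}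
    (hx₀ : ¬IsGreatest (extendedInverse Ψ ⁻¹' {0}) x)
    (hx₁ : ¬IsLeast (extendedInverse Ψ ⁻¹' {1}) x) :
    HasDerivAt (fun y ↦ A (extendedInverse Ψ y)) (2 * B (extendedInverse Ψ x)) x := by
  have hmono := monotone_extendedInverse Ψ
  have hIcc := extendedInverse_mem_Icc Ψ
  have of_eventually_const {c : ℝ} (hc : B c = 0) (hx : extendedInverse Ψ =ᶠ[𝓝 x] fun _ ↦ c) :
      HasDerivAt (fun y ↦ A (extendedInverse Ψ y)) (2 * B (extendedInverse Ψ x)) x := by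
    rw [hx.self_of_nhds, hc, mul_zero]
    exact (hasDerivAt_const x (A c)).congr_of_eventuallyEq (hx.fun_comp A)
  rcases (hIcc x).1.eq_or_lt' with h₀ | h₀
  · exact of_eventually_const hB₀
      (eventuallyEq_const_of_not_isGreatest hmono (fun y ↦ (hIcc y).1) h₀ hx₀)
  rcases (hIcc x).2.eq_or_lt with h₁ | h₁
  · exact of_eventually_const hB₁
      (eventuallyEq_const_of_not_isLeast hmono (fun y ↦ (hIcc y).2) h₁ hx₁)
  have hcont := (continuous_extendedInverse hΨ).continuousAt (x := x)
  exact hAΨ.hasDerivAt_comp (Ioo_mem_nhds h₀ h₁) hcont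
    ((hcont.eventually_mem (Ioo_mem_nhds h₀ h₁)).mono fun y ↦
      apply_extendedInverse hΨc hΨ.monotoneOn)
    ((hB.continuousAt (Icc_mem_nhds h₀ h₁)).const_mul 2)

theorem isStationarySolution_extendedInverse (hA : ContinuousOn A (Icc 0 1))
    (hB : ContinuousOn B (Icc 0 1)) (hB₀ : B 0 = 0) (hB₁ : B 1 = 0)
    (hΨc : ContinuousOn Ψ (Ioo 0 1)) (hΨ : StrictMonoOn Ψ (Ioo 0 1))
    (hAΨ : HasMeanSlopeOn A Ψ (fun u ↦ 2 * B u) (Ioo 0 1)) :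
    IsStationarySolution A B (extendedInverse Ψ) := by
  have hF := continuous_extendedInverse hΨ
  have hBF : Continuous fun x ↦ B (extendedInverse Ψ x) :=
    hB.comp_continuous hF (extendedInverse_mem_Icc Ψ)
  have hcountable : ({x | IsGreatest (extendedInverse Ψ ⁻¹' {0}) x} ∪
      {x | IsLeast (extendedInverse Ψ ⁻¹' {1}) x}).Countable :=
    .union (Set.Subsingleton.countable fun _ hx _ hy ↦ hx.unique hy)
      (Set.Subsingleton.countable fun _ hx _ hy ↦ hx.unique hy)
  refine isStationarySolution_of_hasDerivAt hBF <| hasDerivAt_of_hasDerivAt_off_countable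
    hcountable (hA.comp_continuous hF (extendedInverse_mem_Icc Ψ)) (hBF.const_mul 2) fun x hx ↦ ?_
  rw [mem_union, not_or] at hx
  exact hasDerivAt_comp_extendedInverse hB hB₀ hB₁ hΨc hΨ hAΨ hx.1 hx.2

end Stationary

theorem continuousOn_primitive {f : ℝ → ℝ} (hf : IntegrableOn f (Icc 0 1)) :
    ContinuousOn (primitive f) (Icc 0 1) := by
  rw [← uIcc_of_le zero_le_one] at hf ⊢
  exact intervalIntegral.continuousOn_primitive_interval hf

theorem primitive_sub_primitive {f : ℝ → ℝ} (hf : IntegrableOn f (Icc 0 1)) {u v : ℝ}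
    (hu : u ∈ Icc (0 : ℝ) 1) (hv : v ∈ Icc (0 : ℝ) 1) :
    primitive f v - primitive f u = ∫ t in u..v, f t :=
  have hf' := hf.locallyIntegrableOn
  have h0 : (0 : ℝ) ∈ Icc (0 : ℝ) 1 := left_mem_Icc.2 zero_le_one
  intervalIntegral.integral_interval_sub_left (intervalIntegrable_of_locallyIntegrableOn hf' h0 hv)
    (intervalIntegrable_of_locallyIntegrableOn hf' h0 hu)

/-- The integrand `a / (2B)` of `Ψ`. Division by zero gives `0` in Lean, which agrees with the
convention for points where `a = B = 0`. -/
def psiDensity (a b : ℝ → ℝ) (u : ℝ) : ℝ := a u / (2 * primitive b u)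

section PsiDensity

variable {a b : ℝ → ℝ}

theorem psiDensity_nonneg_ae (ha0 : ∀ᵐ u ∂volume.restrict (Icc (0 : ℝ) 1), 0 ≤ a u)
    (hB0 : ∀ u ∈ Icc (0 : ℝ) 1, 0 ≤ primitive b u) :
    ∀ᵐ u ∂volume.restrict (Ioo (0 : ℝ) 1), 0 ≤ psiDensity a b u := by
  filter_upwards [ae_restrict_of_ae_restrict_of_subset Ioo_subset_Icc_self ha0,
    ae_restrict_mem measurableSet_Ioo] with u hau hu
  exact div_nonneg hau (mul_nonneg zero_le_two (hB0 u (Ioo_subset_Icc_self hu)))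

theorem locallyIntegrableOn_psiDensity (ha : IntegrableOn a (Icc 0 1))
    (hb : IntegrableOn b (Icc 0 1)) (ha0 : ∀ᵐ u ∂volume.restrict (Icc (0 : ℝ) 1), 0 ≤ a u)
    (hloc : ∀ c d : ℝ, 0 < c → c ≤ d → d < 1 →
      (∫⁻ u in Icc c d, ENNReal.ofReal (a u) / ENNReal.ofReal (2 * primitive b u)) < ⊤) :
    LocallyIntegrableOn (psiDensity a b) (Ioo 0 1) := by
  intro x hx
  obtain ⟨c, hc, hcx⟩ := exists_between hx.1
  obtain ⟨d, hxd, hd⟩ := exists_between hx.2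
  have hsub : Icc c d ⊆ Icc 0 1 := Icc_subset_Icc hc.le hd.le
  refine ⟨Icc c d, nhdsWithin_le_nhds (Icc_mem_nhds hcx hxd), ?_⟩
  exact integrable_div_of_lintegral_ofReal_div_lt_top (ha.mono_set hsub).aemeasurable
    (((continuousOn_primitive hb).mono hsub).aemeasurable measurableSet_Icc |>.const_mul 2)
    (ae_restrict_of_ae_restrict_of_subset hsub ha0) (hloc c d hc (hcx.trans hxd).le hd)

theorem ae_eq_two_mul_primitive_mul_psiDensity (ha : IntegrableOn a (Icc 0 1))
    (hb : IntegrableOn b (Icc 0 1)) (ha0 : ∀ᵐ u ∂volume.restrict (Icc (0 : ℝ) 1), 0 ≤ a u)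
    (hloc : ∀ c d : ℝ, 0 < c → c ≤ d → d < 1 →
      (∫⁻ u in Icc c d, ENNReal.ofReal (a u) / ENNReal.ofReal (2 * primitive b u)) < ⊤) :
    ∀ᵐ u ∂volume.restrict (Ioo (0 : ℝ) 1), a u = 2 * primitive b u * psiDensity a b u := by
  refine ae_restrict_of_ae_restrict_inter_Ioo fun c d hc hd hcd ↦ ?_
  have hsub : Icc c d ⊆ Icc 0 1 := Icc_subset_Icc hc.1.le hd.2.le
  refine ae_restrict_of_ae_restrict_of_subset (inter_subset_right.trans Ioo_subset_Icc_self) ?_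
  exact ae_eq_mul_div_of_lintegral_ofReal_div_lt_top (ha.mono_set hsub).aemeasurable
    (((continuousOn_primitive hb).mono hsub).aemeasurable measurableSet_Icc |>.const_mul 2)
    (ae_restrict_of_ae_restrict_of_subset hsub ha0) (hloc c d hc.1 hcd.le hd.2)

end PsiDensity

section Psi

variable {a b : ℝ → ℝ}

theorem continuousOn_Psi (hg : LocallyIntegrableOn (psiDensity a b) (Ioo 0 1)) :
    ContinuousOn (Psi a b) (Ioo 0 1) :=
  continuousOn_integral_of_locallyIntegrableOn hg (by norm_num)

theorem Psi_sub_Psi (hg : LocallyIntegrableOn (psiDensity a b) (Ioo 0 1)) {u v : ℝ}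
    (hu : u ∈ Ioo (0 : ℝ) 1) (hv : v ∈ Ioo (0 : ℝ) 1) :
    Psi a b v - Psi a b u = ∫ t in u..v, psiDensity a b t :=
  have half_mem : (1 / 2 : ℝ) ∈ Ioo (0 : ℝ) 1 := by norm_num
  intervalIntegral.integral_interval_sub_left
    (intervalIntegrable_of_locallyIntegrableOn hg half_mem hv)
    (intervalIntegrable_of_locallyIntegrableOn hg half_mem hu)

theorem monotoneOn_Psi (hg : LocallyIntegrableOn (psiDensity a b) (Ioo 0 1))
    (hg0 : ∀ᵐ u ∂volume.restrict (Ioo (0 : ℝ) 1), 0 ≤ psiDensity a b u) :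
    MonotoneOn (Psi a b) (Ioo 0 1) := by
  intro u hu v hv huv
  rw [← sub_nonneg, Psi_sub_Psi hg hu hv]
  exact intervalIntegral.integral_nonneg_of_ae_restrict huv
    (ae_restrict_of_ae_restrict_of_subset (OrdConnected.out ordConnected_Ioo hu hv) hg0)

theorem hasMeanSlopeOn_primitive_Psi (ha : IntegrableOn a (Icc 0 1))
    (hb : IntegrableOn b (Icc 0 1)) (hg : LocallyIntegrableOn (psiDensity a b) (Ioo 0 1))
    (hg0 : ∀ᵐ u ∂volume.restrict (Ioo (0 : ℝ) 1), 0 ≤ psiDensity a b u)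
    (hag : ∀ᵐ u ∂volume.restrict (Ioo (0 : ℝ) 1), a u = 2 * primitive b u * psiDensity a b u) :
    HasMeanSlopeOn (primitive a) (Psi a b) (fun u ↦ 2 * primitive b u) (Ioo 0 1) := by
  intro u hu v hv
  have huv : uIcc u v ⊆ Ioo 0 1 := OrdConnected.uIcc_subset ordConnected_Ioo hu hv
  have huv' : uIoc u v ⊆ Ioo 0 1 := uIoc_subset_uIcc.trans huv
  obtain ⟨c, hc, hmean⟩ := exists_eq_const_mul_intervalIntegral_of_ae_nonneg
    (((continuousOn_primitive hb).mono (huv.trans Ioo_subset_Icc_self)).const_mul 2)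
    (intervalIntegrable_of_locallyIntegrableOn hg hu hv)
    (ae_restrict_of_ae_restrict_of_subset huv' hg0)
  refine ⟨c, hc, ?_⟩
  calc primitive a v - primitive a u
      = ∫ t in u..v, a t :=
        primitive_sub_primitive ha (Ioo_subset_Icc_self hu) (Ioo_subset_Icc_self hv)
    _ = ∫ t in u..v, 2 * primitive b t * psiDensity a b t :=
        intervalIntegral.integral_congr_ae_restrict
          (ae_restrict_of_ae_restrict_of_subset huv' hag)
    _ = 2 * primitive b c * ∫ t in u..v, psiDensity a b t := hmean
    _ = 2 * primitive b c * (Psi a b v - Psi a b u) := by rw [Psi_sub_Psi hg hu hv]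

end Psi

theorem psi_inverse_is_stationary_solution_general
    (a b : ℝ → ℝ)
    (ha : IntegrableOn a (Icc 0 1)) (hb : IntegrableOn b (Icc 0 1))
    (ha0 : ∀ᵐ u ∂volume.restrict (Icc (0 : ℝ) 1), 0 ≤ a u)
    (hD1 : StrictMonoOn (primitive a) (Icc 0 1))
    (hB1 : primitive b 1 = 0)
    (hB0 : ∀ u ∈ Icc (0 : ℝ) 1, 0 ≤ primitive b u)
    (hloc : ∀ c d : ℝ, 0 < c → c ≤ d → d < 1 →
      (∫⁻ u in Icc c d, ENNReal.ofReal (a u) / ENNReal.ofReal (2 * primitive b u)) < ⊤) :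
    ContinuousOn (Psi a b) (Ioo 0 1) ∧
    StrictMonoOn (Psi a b) (Ioo 0 1) ∧
    IsCDF (PsiInv a b) ∧
    IsStationarySolution (primitive a) (primitive b) (PsiInv a b) := by
  have hg := locallyIntegrableOn_psiDensity ha hb ha0 hloc
  have hg0 := psiDensity_nonneg_ae ha0 hB0
  have hslope := hasMeanSlopeOn_primitive_Psi ha hb hg hg0
    (ae_eq_two_mul_primitive_mul_psiDensity ha hb ha0 hloc)
  have hΨc := continuousOn_Psi hg
  have hΨ := hslope.strictMonoOn (hD1.mono Ioo_subset_Icc_self) (monotoneOn_Psi hg hg0)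
  exact ⟨hΨc, hΨ, isCDF_extendedInverse hΨ,
    isStationarySolution_extendedInverse (continuousOn_primitive ha) (continuousOn_primitive hb)
      intervalIntegral.integral_same hB1 hΨc hΨ hslope⟩

/-- Sufficiency: under (D1), `B(1) = 0`, `B ≥ 0` and local integrability of `a/(2B)`
on `(0,1)`, the function `Ψ` is continuous and increasing on `(0,1)`, and its
(suitably extended) inverse `Ψ⁻¹` is a cumulative distribution function solving the
stationary equation in the sense of distributions. -/
theorem psi_inverse_is_stationary_solution
    (a b : ℝ → ℝ)
    (ha : ContinuousOn a (Set.Icc 0 1)) (hb : ContinuousOn b (Set.Icc 0 1))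
    (ha0 : ∀ u ∈ Set.Icc (0:ℝ) 1, 0 ≤ a u)
    (hD1 : StrictMonoOn (primitive a) (Set.Icc 0 1))
    (hB1 : primitive b 1 = 0)
    (hB0 : ∀ u ∈ Set.Icc (0:ℝ) 1, 0 ≤ primitive b u)
    (hloc : ∀ c d : ℝ, 0 < c → c ≤ d → d < 1 →
      (∫⁻ u in Set.Icc c d,
        ENNReal.ofReal (a u) / ENNReal.ofReal (2 * primitive b u)) < ⊤) :
    ContinuousOn (Psi a b) (Set.Ioo 0 1) ∧
    StrictMonoOn (Psi a b) (Set.Ioo 0 1) ∧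
    IsCDF (PsiInv a b) ∧
    IsStationarySolution (primitive a) (primitive b) (PsiInv a b) := by
  exact psi_inverse_is_stationary_solution_general a b ha.integrableOn_Icc hb.integrableOn_Icc
    (ae_restrict_of_forall_mem measurableSet_Icc ha0) hD1 hB1 hB0 hloc
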